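/- Let G be a finite simple graph such that every subgraph of G with at least one vertex has a vertex of degree at most 5, and every bipartite subgraph of G on m ≥ 3 vertices has at most 2m − 4 edges (every planar graph satisfies both conditions). Then G admits an equitable 2-partition (V_1, V_2) of its vertex set such that both induced subgraphs G[V_1] and G[V_2] are 3-degenerate. -/

import Mathlib

/-!
Since every subgraph of `G` has a vertex of degree at most five, the vertices can be added one at
a time, each having at most five neighbours among the earlier ones; putting each into a part
where it has at most three of them keeps both parts 3-degenerate (`exists_degenerate_split`).

To balance the parts, observe that adding to a 3-degenerate set a vertex with at most three
neighbours in it preserves 3-degeneracy (`DegenerateOn.insert`). If `A` is at least as large as `B`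
and every vertex of `A` had four or more neighbours in `B`, then the bipartite graph between the
parts would have at least `4|A| ≥ 2(|A| + |B|)` edges, exceeding the bipartite edge bound. So some
vertex of `A` can be moved to `B` (`exists_few_neighbors`), and this is repeated until the sizes
differ by at most one.
-/

open SimpleGraph

/-- The set `S` induces a `d`-degenerate subgraph of `G`: every nonempty subset `T` of `S`
contains a vertex with at most `d` neighbors inside `T`. -/
def DegenerateOn {V : Type*} (G : SimpleGraph V) (d : ℕ) (S : Set V) : Prop :=
  ∀ T ⊆ S, T.Nonempty → ∃ v ∈ T, (G.neighborSet v ∩ T).ncard ≤ d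

theorem DegenerateOn.mono {V : Type*} {G : SimpleGraph V} {d : ℕ} {S T : Set V}
    (h : DegenerateOn G d S) (hTS : T ⊆ S) : DegenerateOn G d T :=
  fun U hU hne => h U (hU.trans hTS) hne

theorem DegenerateOn.insert {V : Type*} [Finite V] {G : SimpleGraph V} {d : ℕ} {S : Set V} {v : V}
    (h : DegenerateOn G d S) (hv : (G.neighborSet v ∩ S).ncard ≤ d) :
    DegenerateOn G d (insert v S) := by
  intro T hT hne
  by_cases hvT : v ∈ T
  · refine ⟨v, hvT, le_trans (Set.ncard_le_ncard ?_ (Set.toFinite _)) hv⟩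
    rintro w ⟨hw, hwT⟩
    refine ⟨hw, (hT hwT).resolve_left ?_⟩
    rintro rfl
    exact G.irrefl hw
  · refine h T (fun w hw => (hT hw).resolve_left ?_) hne
    rintro rfl
    exact hvT hw

/-- Every vertex set of a graph satisfying the degree condition splits into two parts inducing
3-degenerate subgraphs: a vertex of degree at most five has at most three neighbours in one of the
two parts of any split of the remaining vertices. -/
theorem exists_degenerate_split {V : Type*} [Fintype V] [DecidableEq V] (G : SimpleGraph V)
    (hdeg : ∀ H : G.Subgraph, H.verts.Nonempty → ∃ v ∈ H.verts, (H.neighborSet v).ncard ≤ 5)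
    (S : Finset V) :
    ∃ A B : Finset V, Disjoint A B ∧ A ∪ B = S ∧
      DegenerateOn G 3 (A : Set V) ∧ DegenerateOn G 3 (B : Set V) := by
  induction S using Finset.strongInduction with
  | H S ih =>
    rcases S.eq_empty_or_nonempty with rfl | hS
    · refine ⟨∅, ∅, by simp, by simp, ?_, ?_⟩ <;>
      · intro T hT hne
        obtain ⟨x, hx⟩ := hne
        simpa using hT hx
    · obtain ⟨v, hv, hv5⟩ := hdeg ((⊤ : G.Subgraph).induce (S : Set V)) (by simpa using hS)
      have hvS : v ∈ S := by simpa using hv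
      obtain ⟨A, B, hAB, hU, hA, hB⟩ := ih (S.erase v) (Finset.erase_ssubset hvS)
      have hvU : v ∉ A ∪ B := by rw [hU]; simp
      rw [Finset.notMem_union] at hvU
      have hsum : (G.neighborSet v ∩ A).ncard + (G.neighborSet v ∩ B).ncard ≤ 5 := by
        rw [← Set.ncard_union_eq ?_ (Set.toFinite _) (Set.toFinite _)]
        · refine le_trans (Set.ncard_le_ncard ?_ (Set.toFinite _)) hv5
          intro w hw
          have hwS : w ∈ S := by
            apply Finset.mem_of_mem_erase (a := v)
            rw [← hU, Finset.mem_union]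
            exact hw.imp (fun h => h.2) (fun h => h.2)
          have hadj : G.Adj v w := hw.elim (fun h => h.1) (fun h => h.1)
          simp [Subgraph.neighborSet, hvS, hwS, hadj]
        · exact (Finset.disjoint_coe.2 hAB).mono Set.inter_subset_right Set.inter_subset_right
      by_cases h3 : (G.neighborSet v ∩ A).ncard ≤ 3
      · refine ⟨insert v A, B, ?_, ?_, ?_, hB⟩
        · exact Finset.disjoint_insert_left.2 ⟨hvU.2, hAB⟩
        · rw [Finset.insert_union, hU, Finset.insert_erase hvS]
        · rw [Finset.coe_insert]; exact hA.insert h3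
      · refine ⟨A, insert v B, ?_, ?_, hA, ?_⟩
        · exact Finset.disjoint_insert_right.2 ⟨hvU.1, hAB⟩
        · rw [Finset.union_insert, hU, Finset.insert_erase hvS]
        · rw [Finset.coe_insert]; exact hB.insert (by omega)

/-- The subgraph of `G` on `A ∪ B` whose edges are the edges of `G` between `A` and `B`. -/
def crossSubgraph {V : Type*} (G : SimpleGraph V) (A B : Set V) : G.Subgraph where
  verts := A ∪ B
  Adj u v := G.Adj u v ∧ ((u ∈ A ∧ v ∈ B) ∨ (u ∈ B ∧ v ∈ A))
  adj_sub h := h.1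
  edge_vert h := h.2.imp (fun h => h.1) (fun h => h.1)
  symm := ⟨fun _ _ h => ⟨h.1.symm, h.2.symm.imp And.symm And.symm⟩⟩

/-- Under the bipartite edge bound, the larger of two disjoint sets, if nonempty, contains a vertex with at most
three neighbours in the other, by counting the edges between them. -/
theorem exists_few_neighbors {V : Type*} [Fintype V] [DecidableEq V] (G : SimpleGraph V)
    (hbip : ∀ H : G.Subgraph, ∀ X Y : Set V, X ∪ Y = H.verts → Disjoint X Y →
      (∀ u v, H.Adj u v → (u ∈ X ∧ v ∈ Y) ∨ (u ∈ Y ∧ v ∈ X)) →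
      3 ≤ H.verts.ncard → H.edgeSet.ncard ≤ 2 * H.verts.ncard - 4)
    (A B : Finset V) (hAB : Disjoint A B) (hne : A.Nonempty) (hle : B.card ≤ A.card) :
    ∃ v ∈ A, (G.neighborSet v ∩ B).ncard ≤ 3 := by
  classical
  by_contra! hcon
  have hfilter (v : V) : (G.neighborSet v ∩ B).ncard = (B.filter (G.Adj v)).card := by
    rw [← Set.ncard_coe_finset]
    congr 1
    ext w
    simp [and_comm]
  simp only [hfilter] at hcon
  have hB : 4 ≤ B.card := by
    obtain ⟨v, hv⟩ := hne
    exact le_trans (hcon v hv) (Finset.card_filter_le _ _)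
  have hverts : (crossSubgraph G (A : Set V) B).verts.ncard = A.card + B.card := by
    rw [← Finset.card_union_of_disjoint hAB, ← Set.ncard_coe_finset, Finset.coe_union]
    rfl
  have hbound := hbip (crossSubgraph G (A : Set V) B) A B rfl (Finset.disjoint_coe.2 hAB)
    (fun u v h => h.2) (by omega)
  let P : Finset (Σ _ : V, V) := A.sigma fun v => B.filter (G.Adj v)
  have hP : 4 * A.card ≤ P.card := by
    rw [Finset.card_sigma, mul_comm, ← smul_eq_mul]
    exact Finset.card_nsmul_le_sum _ _ _ fun v hv => hcon v hv
  have hPE : P.card ≤ (crossSubgraph G (A : Set V) B).edgeSet.ncard := by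
    rw [← Set.ncard_coe_finset]
    refine Set.ncard_le_ncard_of_injOn (fun p => s(p.1, p.2)) ?_ ?_ (Set.toFinite _)
    · rintro ⟨a, b⟩ h
      simp only [P, Finset.mem_coe, Finset.mem_sigma, Finset.mem_filter] at h
      exact ⟨h.2.2, Or.inl ⟨h.1, h.2.1⟩⟩
    · rintro ⟨a, b⟩ h ⟨c, d⟩ h' heq
      simp only [P, Finset.mem_coe, Finset.mem_sigma, Finset.mem_filter] at h h'
      rcases Sym2.eq_iff.1 heq with ⟨rfl, rfl⟩ | ⟨rfl, rfl⟩
      · rfl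
      · exact absurd h'.2.1 (Finset.disjoint_left.1 hAB h.1)
  omega

/-- A partition into 3-degenerate parts can be made equitable by moving vertices one at a time
from the larger part to the smaller. -/
theorem exists_balanced {V : Type*} [Fintype V] [DecidableEq V] (G : SimpleGraph V)
    (hbip : ∀ H : G.Subgraph, ∀ X Y : Set V, X ∪ Y = H.verts → Disjoint X Y →
      (∀ u v, H.Adj u v → (u ∈ X ∧ v ∈ Y) ∨ (u ∈ Y ∧ v ∈ X)) →
      3 ≤ H.verts.ncard → H.edgeSet.ncard ≤ 2 * H.verts.ncard - 4)
    (n : ℕ) : ∀ A B : Finset V, A.card = n → Disjoint A B → A ∪ B = Finset.univ →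
      B.card ≤ A.card → DegenerateOn G 3 (A : Set V) → DegenerateOn G 3 (B : Set V) →
    ∃ V₁ V₂ : Finset V,
      Disjoint V₁ V₂ ∧ V₁ ∪ V₂ = Finset.univ ∧
      |(V₁.card : ℤ) - (V₂.card : ℤ)| ≤ 1 ∧
      DegenerateOn G 3 (V₁ : Set V) ∧ DegenerateOn G 3 (V₂ : Set V) := by
  induction n with
  | zero =>
    intro A B hn hAB hU hle hA hB
    exact ⟨A, B, hAB, hU, by rw [abs_le]; omega, hA, hB⟩
  | succ n ih =>
    intro A B hn hAB hU hle hA hB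
    by_cases hbal : A.card ≤ B.card + 1
    · exact ⟨A, B, hAB, hU, by rw [abs_le]; omega, hA, hB⟩
    · obtain ⟨v, hvA, hv⟩ := exists_few_neighbors G hbip A B hAB
        (Finset.card_pos.1 (by omega)) hle
      have hvB : v ∉ B := Finset.disjoint_left.1 hAB hvA
      have hcA := Finset.card_erase_of_mem hvA
      have hcB := Finset.card_insert_of_notMem hvB
      refine ih (A.erase v) (insert v B) (by omega) ?_ ?_ (by omega) ?_ ?_
      · exact Finset.disjoint_insert_right.2
          ⟨by simp, hAB.mono_left (Finset.erase_subset _ _)⟩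
      · rw [Finset.union_insert, ← Finset.insert_union, Finset.insert_erase hvA, hU]
      · exact hA.mono (Finset.coe_subset.2 (Finset.erase_subset _ _))
      · rw [Finset.coe_insert]; exact hB.insert hv

theorem equitable_two_partition_into_three_degenerate
    {V : Type*} [Fintype V] [DecidableEq V] (G : SimpleGraph V)
    (hdeg : ∀ H : G.Subgraph, H.verts.Nonempty → ∃ v ∈ H.verts, (H.neighborSet v).ncard ≤ 5)
    (hbip : ∀ H : G.Subgraph, ∀ X Y : Set V, X ∪ Y = H.verts → Disjoint X Y →
      (∀ u v, H.Adj u v → (u ∈ X ∧ v ∈ Y) ∨ (u ∈ Y ∧ v ∈ X)) →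
      3 ≤ H.verts.ncard → H.edgeSet.ncard ≤ 2 * H.verts.ncard - 4) :
    ∃ V₁ V₂ : Finset V,
      Disjoint V₁ V₂ ∧ V₁ ∪ V₂ = Finset.univ ∧
      |(V₁.card : ℤ) - (V₂.card : ℤ)| ≤ 1 ∧
      DegenerateOn G 3 (V₁ : Set V) ∧ DegenerateOn G 3 (V₂ : Set V) := by
  obtain ⟨A, B, hAB, hU, hA, hB⟩ := exists_degenerate_split G hdeg Finset.univ
  rcases le_total B.card A.card with h | h
  · exact exists_balanced G hbip _ A B rfl hAB hU h hA hB
  · exact exists_balanced G hbip _ B A rfl hAB.symm (by rw [Finset.union_comm, hU]) h hB hA
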